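/- arXiv:2212.12009 — 2 statements merged into one kernel-verified Lean document; each statement's English description precedes it below -/
import Mathlib

section
/- Let Θ be a partially ordered set in which every pair of elements has an upper bound and a lower bound in Θ, let A be a set, and let u : A × Θ → ℝ be such that the environment (A, Θ, u) is convex. Then u has monotonic differences (MD), i.e., for all a, a' ∈ A the function θ ↦ u(a,θ) − u(a',θ) is monotone, if and only if there exist functions g₁, g₂ : A → ℝ and f₁, h : Θ → ℝ with f₁ monotone such that u(a, θ) = g₁(a)·f₁(θ) + g₂(a) + h(θ) for all a ∈ A and θ ∈ Θ. -/
/-!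
Convexity makes every element of the direction space `V` of the affine span of the functions
`u a` a multiple of a difference `u p - u q`, so under monotonic differences every element of `V`
is monotone or antitone. Let `f, g ∈ V`, and let `L` be a lower and `H` an upper bound of three
given points. The combination `(f H - f L) • g - (g H - g L) • f` lies in `V` and agrees at `L` and
`H`, so it is constant on `[L, H]`. This forces the increments of `f` and `g` between the three
points to be proportional. Hence `V` is spanned, modulo constants, by a single function `f₁`.
-/

/-- A function `f : Θ → ℝ` is single crossing if `θ ↦ sgn (f θ)` is monotone
(increasing or decreasing). -/
def SingleCrossing {Θ : Type*} [PartialOrder Θ] (f : Θ → ℝ) : Prop :=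
  Monotone (fun θ => Real.sign (f θ)) ∨ Antitone (fun θ => Real.sign (f θ))

/-- Strictly single crossing: single crossing and no two ordered zeros. -/
def StrictSingleCrossing {Θ : Type*} [PartialOrder Θ] (f : Θ → ℝ) : Prop :=
  SingleCrossing f ∧ ∀ θ' θ'' : Θ, θ' < θ'' → ¬(f θ' = 0 ∧ f θ'' = 0)

/-- A subset of a partially ordered set is an interval. -/
def IsIntervalSet {Θ : Type*} [PartialOrder Θ] (S : Set Θ) : Prop :=
  ∀ θl θm θh : Θ, θl ∈ S → θh ∈ S → θl < θm → θm < θh → θm ∈ S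

/-- Single-crossing differences. -/
def SCD {A : Type*} {Θ : Type*} [PartialOrder Θ] (u : A → Θ → ℝ) : Prop :=
  ∀ a a' : A, SingleCrossing (fun θ => u a θ - u a' θ)

/-- Strict single-crossing differences. -/
def SSCD {A : Type*} {Θ : Type*} [PartialOrder Θ] (u : A → Θ → ℝ) : Prop :=
  ∀ a a' : A, a ≠ a' → StrictSingleCrossing (fun θ => u a θ - u a' θ)

/-- The choice correspondence `C_u(S, θ)`. -/
def choiceCorr {A : Type*} {Θ : Type*} (u : A → Θ → ℝ) (S : Set A) (θ : Θ) : Set A :=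
  {a ∈ S | ∀ b ∈ S, u b θ ≤ u a θ}

/-- `f₁` ratio dominates `f₂`: conditions (RD) and (RD+). -/
def RatioDominates {Θ : Type*} [PartialOrder Θ] (f₁ f₂ : Θ → ℝ) : Prop :=
  (∀ θl θh : Θ, θl < θh → f₁ θl * f₂ θh ≤ f₁ θh * f₂ θl) ∧
  (∀ θl θm θh : Θ, θl < θm → θm < θh →
    (f₁ θl * f₂ θh = f₁ θh * f₂ θl ↔
      (f₁ θl * f₂ θm = f₁ θm * f₂ θl ∧ f₁ θm * f₂ θh = f₁ θh * f₂ θm)))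

/-- `f₁` and `f₂` are ratio ordered. -/
def RatioOrdered {Θ : Type*} [PartialOrder Θ] (f₁ f₂ : Θ → ℝ) : Prop :=
  RatioDominates f₁ f₂ ∨ RatioDominates f₂ f₁

/-- `f₁` strictly ratio dominates `f₂`. -/
def StrictRatioDominates {Θ : Type*} [PartialOrder Θ] (f₁ f₂ : Θ → ℝ) : Prop :=
  ∀ θl θh : Θ, θl < θh → f₁ θl * f₂ θh < f₁ θh * f₂ θl

/-- `f₁` and `f₂` are strictly ratio ordered. -/
def StrictRatioOrdered {Θ : Type*} [PartialOrder Θ] (f₁ f₂ : Θ → ℝ) : Prop :=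
  StrictRatioDominates f₁ f₂ ∨ StrictRatioDominates f₂ f₁

/-- The environment `(A, Θ, u)` is convex. -/
def ConvexEnv {A : Type*} {Θ : Type*} (u : A → Θ → ℝ) : Prop :=
  ∀ a a' : A, ∀ lam : ℝ, 0 < lam → lam < 1 →
    ∃ a'' : A, ∀ θ : Θ, u a'' θ = lam * u a θ + (1 - lam) * u a' θ

/-- `A` is minimal with respect to `u`: no utility-indistinguishable pair. -/
def MinimalActions {A : Type*} {Θ : Type*} (u : A → Θ → ℝ) : Prop :=
  ∀ a a' : A, a ≠ a' → ∃ θ : Θ, u a θ ≠ u a' θ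

/-- `f : Z × Θ → ℝ` is linear combinations SC-preserving. -/
def LinCombSCPreserving {Z : Type*} {Θ : Type*} [PartialOrder Θ] (f : Z → Θ → ℝ) : Prop :=
  ∀ μ : Z → ℝ, (Function.support μ).Finite →
    SingleCrossing (fun θ => ∑ᶠ z, μ z * f z θ)

/-- `f : Z × Θ → ℝ` is linear combinations SSC-preserving. -/
def LinCombSSCPreserving {Z : Type*} {Θ : Type*} [PartialOrder Θ] (f : Z → Θ → ℝ) : Prop :=
  ∀ μ : Z → ℝ, (Function.support μ).Finite →
    ((∀ θ : Θ, (∑ᶠ z, μ z * f z θ) = 0) ∨ StrictSingleCrossing (fun θ => ∑ᶠ z, μ z * f z θ))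

/-- `f : Z × Θ → ℝ` is linear combinations monotonicity-preserving. -/
def LinCombMonPreserving {Z : Type*} {Θ : Type*} [PartialOrder Θ] (f : Z → Θ → ℝ) : Prop :=
  ∀ μ : Z → ℝ, (Function.support μ).Finite →
    (Monotone (fun θ => ∑ᶠ z, μ z * f z θ) ∨ Antitone (fun θ => ∑ᶠ z, μ z * f z θ))

/-- A finite-support lottery on `X`. -/
def IsLottery {X : Type*} (P : X → ℝ) : Prop :=
  (∀ x, 0 ≤ P x) ∧ (Function.support P).Finite ∧ (∑ᶠ x, P x) = 1

/-- Single-crossing expectational differences. -/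
def SCED {X : Type*} {Θ : Type*} [PartialOrder Θ] (v : X → Θ → ℝ) : Prop :=
  ∀ P Q : X → ℝ, IsLottery P → IsLottery Q →
    SingleCrossing (fun θ => (∑ᶠ x, P x * v x θ) - ∑ᶠ x, Q x * v x θ)

section MonotoneOrAntitone

variable {α β K : Type*} [Preorder α]

theorem eq_of_monotone_or_antitone_of_mem_Icc [PartialOrder β] {f : α → β}
    (hf : Monotone f ∨ Antitone f) {l h x : α} (hlh : f l = f h) (hx : x ∈ Set.Icc l h) :
    f x = f l := by
  rcases hf with hf | hf
  · exact le_antisymm ((hf hx.2).trans_eq hlh.symm) (hf hx.1)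
  · exact le_antisymm (hf hx.1) (hlh.trans_le (hf hx.2))

theorem monotone_or_antitone_const_smul [Ring K] [LinearOrder K] [IsOrderedRing K]
    [AddCommGroup β] [PartialOrder β] [IsOrderedAddMonoid β] [Module K β] [PosSMulMono K β]
    {f : α → β} (hf : Monotone f ∨ Antitone f) (c : K) :
    Monotone (c • f) ∨ Antitone (c • f) := by
  rcases le_total 0 c with hc | hc
  · exact hf.imp (·.const_smul hc) (·.const_smul hc)
  · exact hf.symm.imp (antitone_smul_left hc).comp (antitone_smul_left hc).comp_monotone

end MonotoneOrAntitone

section Submodule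

variable {Θ K : Type*} [Preorder Θ] [IsDirectedOrder Θ] [IsCodirectedOrder Θ] [PartialOrder K]

theorem sub_mul_sub_eq_of_forall_monotone_or_antitone [CommRing K] [NoZeroDivisors K]
    {V : Submodule K (Θ → K)} (hV : ∀ f ∈ V, Monotone f ∨ Antitone f) {f g : Θ → K}
    (hf : f ∈ V) (hg : g ∈ V) (x y z : Θ) :
    (f x - f z) * (g y - g z) = (f y - f z) * (g x - g z) := by
  have : Nonempty Θ := ⟨x⟩
  obtain ⟨L, hL⟩ := ({x, y, z} : Set Θ).toFinite.bddBelow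
  obtain ⟨H, hH⟩ := ({x, y, z} : Set Θ).toFinite.bddAbove
  have hx : x ∈ Set.Icc L H := ⟨hL (by simp), hH (by simp)⟩
  have hy : y ∈ Set.Icc L H := ⟨hL (by simp), hH (by simp)⟩
  have hz : z ∈ Set.Icc L H := ⟨hL (by simp), hH (by simp)⟩
  by_cases hLH : f L = f H
  · have hconst : ∀ t ∈ Set.Icc L H, f t = f L := fun _ ↦
      eq_of_monotone_or_antitone_of_mem_Icc (hV f hf) hLH
    simp [hconst x hx, hconst y hy, hconst z hz]
  · set k : Θ → K := (f H - f L) • g - (g H - g L) • f with hk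
    have hkV : k ∈ V := V.sub_mem (V.smul_mem _ hg) (V.smul_mem _ hf)
    have hkLH : k L = k H := by
      simp only [hk, Pi.sub_apply, Pi.smul_apply, smul_eq_mul]
      ring
    have hconst : ∀ t ∈ Set.Icc L H,
        (f H - f L) * g t - (g H - g L) * f t = (f H - f L) * g L - (g H - g L) * f L := fun _ ↦
      eq_of_monotone_or_antitone_of_mem_Icc (hV k hkV) hkLH
    have hxz : (f H - f L) * (g x - g z) = (g H - g L) * (f x - f z) := by
      linear_combination hconst x hx - hconst z hz
    have hyz : (f H - f L) * (g y - g z) = (g H - g L) * (f y - f z) := by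
      linear_combination hconst y hy - hconst z hz
    apply mul_left_cancel₀ (sub_ne_zero.2 (Ne.symm hLH))
    linear_combination (f x - f z) * hyz - (f y - f z) * hxz

theorem exists_mem_forall_mem_eq_mul_add [Field K] {V : Submodule K (Θ → K)}
    (hV : ∀ f ∈ V, Monotone f ∨ Antitone f) :
    ∃ f ∈ V, ∀ g ∈ V, ∃ c d : K, ∀ θ, g θ = c * f θ + d := by
  by_cases hconst : ∀ f ∈ V, ∀ x y, f x = f y
  · refine ⟨0, V.zero_mem, fun g hg ↦ ?_⟩
    rcases isEmpty_or_nonempty Θ with _ | ⟨⟨θ₀⟩⟩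
    · exact ⟨0, 0, isEmptyElim⟩
    · exact ⟨0, g θ₀, fun θ ↦ by simpa using hconst g hg θ θ₀⟩
  · push Not at hconst
    obtain ⟨f, hf, x, y, hxy⟩ := hconst
    have hne : f x - f y ≠ 0 := sub_ne_zero.2 hxy
    refine ⟨f, hf, fun g hg ↦
      ⟨(g x - g y) / (f x - f y), g y - (g x - g y) / (f x - f y) * f y, fun θ ↦ ?_⟩⟩
    have hprop := sub_mul_sub_eq_of_forall_monotone_or_antitone hV hf hg x θ y
    field_simp
    linear_combination hprop

end Submodule

section Convex

variable {K : Type*} [Field K] [LinearOrder K] [IsStrictOrderedRing K]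

theorem exists_eq_smul_sub_of_mem_vectorSpan {E : Type*} [AddCommGroup E] [Module K E]
    {s : Set E} (hs : Convex K s) (hne : s.Nonempty) {v : E} (hv : v ∈ vectorSpan K s) :
    ∃ c : K, 0 ≤ c ∧ ∃ p ∈ s, ∃ q ∈ s, v = c • (p - q) := by
  rw [vectorSpan_def] at hv
  induction hv using Submodule.span_induction with
  | mem v hv =>
    obtain ⟨p, hp, q, hq, rfl⟩ := hv
    exact ⟨1, zero_le_one, p, hp, q, hq, by simp⟩
  | zero =>
    obtain ⟨p, hp⟩ := hne
    exact ⟨0, le_rfl, p, hp, p, hp, by simp⟩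
  | add v w _ _ ihv ihw =>
    obtain ⟨c, hc, p, hp, q, hq, rfl⟩ := ihv
    obtain ⟨d, hd, p', hp', q', hq', rfl⟩ := ihw
    obtain ⟨r, hr, hr_eq⟩ := hs.exists_mem_add_smul_eq hp hp' hc hd
    obtain ⟨t, ht, ht_eq⟩ := hs.exists_mem_add_smul_eq hq hq' hc hd
    refine ⟨c + d, add_nonneg hc hd, r, hr, t, ht, ?_⟩
    rw [smul_sub (c + d), hr_eq, ht_eq]
    module
  | smul a v _ ih =>
    obtain ⟨c, hc, p, hp, q, hq, rfl⟩ := ih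
    rcases le_total 0 a with ha | ha
    · exact ⟨a * c, mul_nonneg ha hc, p, hp, q, hq, smul_smul ..⟩
    · exact ⟨-a * c, mul_nonneg (neg_nonneg.2 ha) hc, q, hq, p, hp, by module⟩

theorem monotone_or_antitone_of_mem_vectorSpan {Θ : Type*} [Preorder Θ] {s : Set (Θ → K)}
    (hs : Convex K s) (hne : s.Nonempty)
    (hmd : ∀ p ∈ s, ∀ q ∈ s, Monotone (p - q) ∨ Antitone (p - q))
    {f : Θ → K} (hf : f ∈ vectorSpan K s) : Monotone f ∨ Antitone f := by
  obtain ⟨c, -, p, hp, q, hq, rfl⟩ := exists_eq_smul_sub_of_mem_vectorSpan hs hne hf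
  exact monotone_or_antitone_const_smul (hmd p hp q hq) c

theorem ConvexEnv.convex_range {A Θ : Type*} {u : A → Θ → ℝ} (hu : ConvexEnv u) :
    Convex ℝ (Set.range u) := by
  rw [convex_iff_forall_pos]
  rintro _ ⟨a, rfl⟩ _ ⟨a', rfl⟩ r t hr ht hrt
  obtain ⟨a'', ha''⟩ := hu a a' r hr (by linarith)
  refine ⟨a'', funext fun θ ↦ ?_⟩
  simp [ha'', ← hrt]

theorem md_in_convex_env_iff_general {Θ A : Type*} [Preorder Θ] [IsDirectedOrder Θ]
    [IsCodirectedOrder Θ] {u : A → Θ → K} (hu : Convex K (Set.range u)) :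
    (∀ a a' : A,
      Monotone (fun θ => u a θ - u a' θ) ∨ Antitone (fun θ => u a θ - u a' θ)) ↔
      ∃ (g₁ g₂ : A → K) (f₁ h : Θ → K),
        (Monotone f₁ ∨ Antitone f₁) ∧
        (∀ (a : A) (θ : Θ), u a θ = g₁ a * f₁ θ + g₂ a + h θ) := by
  constructor
  · intro hmd
    rcases isEmpty_or_nonempty A with _ | ⟨⟨a₀⟩⟩
    · exact ⟨0, 0, 0, 0, Or.inl monotone_const, isEmptyElim⟩
    have hV : ∀ f ∈ vectorSpan K (Set.range u), Monotone f ∨ Antitone f := fun _ ↦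
      monotone_or_antitone_of_mem_vectorSpan hu ⟨u a₀, a₀, rfl⟩
        (Set.forall_mem_range.2 fun a ↦ Set.forall_mem_range.2 (hmd a))
    obtain ⟨f₁, hf₁, hspan⟩ := exists_mem_forall_mem_eq_mul_add hV
    have hdiff (a : A) : ∃ c d : K, ∀ θ, u a θ - u a₀ θ = c * f₁ θ + d :=
      hspan _ (vsub_mem_vectorSpan K ⟨a, rfl⟩ ⟨a₀, rfl⟩)
    choose g₁ g₂ hg using hdiff
    exact ⟨g₁, g₂, f₁, u a₀, hV f₁ hf₁, fun a θ ↦ sub_eq_iff_eq_add.1 (hg a θ)⟩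
  · rintro ⟨g₁, g₂, f₁, h, hf₁, hu_eq⟩ a a'
    have hdiff : (fun θ ↦ u a θ - u a' θ) =
        fun θ ↦ ((g₁ a - g₁ a') • f₁) θ + (g₂ a - g₂ a') := by
      ext θ
      simp only [hu_eq, Pi.smul_apply, smul_eq_mul]
      ring
    rw [hdiff]
    exact (monotone_or_antitone_const_smul hf₁ _).imp (·.add_const _) (·.add_const _)

end Convex

/-- In a convex environment, `u` has monotonic differences iff it
takes the form `u(a,θ) = g₁(a)f₁(θ) + g₂(a) + h(θ)` with `f₁` monotone. -/
theorem md_in_convex_env_iff {Θ A : Type*} [PartialOrder Θ]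
    (hub : ∀ θ₁ θ₂ : Θ, ∃ θ : Θ, θ₁ ≤ θ ∧ θ₂ ≤ θ)
    (hlb : ∀ θ₁ θ₂ : Θ, ∃ θ : Θ, θ ≤ θ₁ ∧ θ ≤ θ₂)
    (u : A → Θ → ℝ) (hconv : ConvexEnv u) :
    (∀ a a' : A,
      Monotone (fun θ => u a θ - u a' θ) ∨ Antitone (fun θ => u a θ - u a' θ)) ↔
      ∃ (g₁ g₂ : A → ℝ) (f₁ h : Θ → ℝ),
        (Monotone f₁ ∨ Antitone f₁) ∧
        (∀ (a : A) (θ : Θ), u a θ = g₁ a * f₁ θ + g₂ a + h θ) := by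
  have : IsDirectedOrder Θ := ⟨hub⟩
  have : IsCodirectedOrder Θ := ⟨hlb⟩
  exact md_in_convex_env_iff_general hconv.convex_range
end

section
/- Let Θ be a partially ordered set in which every pair of elements has an upper bound and a lower bound in Θ, and let f₁, f₂ : Θ → ℝ. Then the linear combination θ ↦ α₁·f₁(θ) + α₂·f₂(θ) is strictly single crossing for every (α₁, α₂) ∈ ℝ² \ {(0,0)} if and only if f₁ and f₂ are strictly ratio ordered. -/
/-!
Let `D l h = f₁ h * f₂ l - f₁ l * f₂ h`. Strict ratio ordering says that `D` has one constant
nonzero sign on all pairs `l < h`, and `D l h ≠ 0` says exactly that no nontrivial linear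
combination of `f₁` and `f₂` vanishes at both `l` and `h`.

If `D > 0` on ordered pairs and `g` is a linear combination, consider the identity
`D x z * g y = D y z * g x + D x y * g z` with `z` an upper bound. When `g z > 0` it forces the sign
of `g` to increase below `z`; when `g z = 0` it forces `g` to have one sign strictly below `z`. So
`sgn g` is monotone or antitone below every point, hence globally since the order is directed.

Conversely, `D l ·` and `D · h` are linear combinations that vanish at `l` and at `h` respectively.
Strict single crossing gives `D l ·` one sign above `l` and `D · h` one sign below `h`, so `D` has
the same sign at `(a, b)`, `(a, q)`, `(c, q)` and `(c, d)` for any common upper bound `q` of `b`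
and `d`.
-/

open Set

theorem monotone_or_antitone_of_forall_Iic {α β : Type*} [Preorder α] [IsDirectedOrder α]
    [Preorder β] {f : α → β} (hf : ∀ q, MonotoneOn f (Iic q) ∨ AntitoneOn f (Iic q)) :
    Monotone f ∨ Antitone f := by
  by_contra! hcon
  simp only [Monotone, Antitone, not_forall] at hcon
  obtain ⟨⟨a, b, hab, hmono⟩, c, d, hcd, hanti⟩ := hcon
  obtain ⟨q, hbq, hdq⟩ := exists_ge_ge b d
  rcases hf q with hq | hq
  · exact hmono (hq (hab.trans hbq) hbq hab)
  · exact hanti (hq (hcd.trans hdq) hdq hcd)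

theorem monotoneOn_or_antitoneOn_Iic_of_const_Iio {α β : Type*} [PartialOrder α] [LinearOrder β]
    {f : α → β} {q : α} (hf : ∀ x < q, ∀ y < q, f x = f y) :
    MonotoneOn f (Iic q) ∨ AntitoneOn f (Iic q) := by
  by_cases hle : ∀ x < q, f x ≤ f q
  · refine Or.inl fun x _ y hyq hxy => ?_
    rcases hyq.eq_or_lt with rfl | hyq
    · exact hxy.eq_or_lt.elim (fun h => h ▸ le_rfl) (hle x)
    · exact (hf x (hxy.trans_lt hyq) y hyq).le
  · push Not at hle
    obtain ⟨t, htq, ht⟩ := hle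
    refine Or.inr fun x _ y hyq hxy => ?_
    rcases hyq.eq_or_lt with rfl | hyq
    · exact hxy.eq_or_lt.elim (fun h => h ▸ le_rfl) fun hxy => hf t htq x hxy ▸ ht.le
    · exact (hf y hyq x (hxy.trans_lt hyq)).le

theorem exists_ne_zero_mul_add_mul_eq_zero_iff {R : Type*} [CommRing R] [IsDomain R]
    {a b c d : R} :
    (∃ x y : R, ¬(x = 0 ∧ y = 0) ∧ x * a + y * b = 0 ∧ x * c + y * d = 0) ↔
      c * b - a * d = 0 := by
  have hdet : c * b - a * d = (!![c, d; a, b] : Matrix (Fin 2) (Fin 2) R).det := by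
    rw [Matrix.det_fin_two_of, mul_comm d a]
  rw [hdet, ← Matrix.exists_mulVec_eq_zero_iff]
  simp [funext_iff, Fin.forall_fin_two, Fin.exists_fin_succ_pi, dotProduct, mul_comm, and_comm]

theorem real_sign_le_sign_iff {a b : ℝ} :
    Real.sign a ≤ Real.sign b ↔ SignType.sign a ≤ SignType.sign b := by
  rcases lt_trichotomy a 0 with ha | rfl | ha <;> rcases lt_trichotomy b 0 with hb | rfl | hb <;>
    simp [Real.sign_of_neg, Real.sign_of_pos, *]

section RatioDet

variable {Θ R : Type*} [CommRing R]

/-- The linear combination `α₁ f₁ + α₂ f₂`, written pointwise. -/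
def linComb (α₁ α₂ : R) (f₁ f₂ : Θ → R) : Θ → R :=
  fun θ => α₁ * f₁ θ + α₂ * f₂ θ

/-- The determinant with rows `(f₁ h, f₂ h)` and `(f₁ l, f₂ l)`. Its sign for `l < h` compares the
ratios `f₁ / f₂` at `l` and `h` without dividing. -/
def ratioDet (f₁ f₂ : Θ → R) (l h : Θ) : R :=
  f₁ h * f₂ l - f₁ l * f₂ h

theorem linComb_comm (α₁ α₂ : R) (f₁ f₂ : Θ → R) :
    linComb α₁ α₂ f₁ f₂ = linComb α₂ α₁ f₂ f₁ :=
  funext fun _ => add_comm _ _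

theorem linComb_neg_neg (α₁ α₂ : R) (f₁ f₂ : Θ → R) :
    linComb (-α₁) (-α₂) f₁ f₂ = -linComb α₁ α₂ f₁ f₂ := by
  funext θ
  simp only [linComb, Pi.neg_apply]
  ring

theorem ratioDet_self (f₁ f₂ : Θ → R) (θ : Θ) : ratioDet f₁ f₂ θ θ = 0 :=
  sub_self _

theorem ratioDet_left_eq_linComb (f₁ f₂ : Θ → R) (l : Θ) :
    ratioDet f₁ f₂ l = linComb (f₂ l) (-f₁ l) f₁ f₂ := by
  funext h
  simp only [ratioDet, linComb]
  ring

theorem ratioDet_right_eq_linComb (f₁ f₂ : Θ → R) (h : Θ) :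
    (ratioDet f₁ f₂ · h) = linComb (-f₂ h) (f₁ h) f₁ f₂ := by
  funext l
  simp only [ratioDet, linComb]
  ring

theorem ratioDet_mul_linComb (α₁ α₂ : R) (f₁ f₂ : Θ → R) (x y z : Θ) :
    ratioDet f₁ f₂ x z * linComb α₁ α₂ f₁ f₂ y =
      ratioDet f₁ f₂ y z * linComb α₁ α₂ f₁ f₂ x +
        ratioDet f₁ f₂ x y * linComb α₁ α₂ f₁ f₂ z := by
  simp only [ratioDet, linComb]
  ring

theorem ratioDet_ne_zero_iff [IsDomain R] {f₁ f₂ : Θ → R} {l h : Θ} :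
    ratioDet f₁ f₂ l h ≠ 0 ↔ ∀ α₁ α₂ : R, ¬(α₁ = 0 ∧ α₂ = 0) →
      ¬(linComb α₁ α₂ f₁ f₂ l = 0 ∧ linComb α₁ α₂ f₁ f₂ h = 0) := by
  rw [ratioDet, Ne, ← exists_ne_zero_mul_add_mul_eq_zero_iff]
  simp only [not_exists, not_and, linComb]

end RatioDet

section Order

variable {Θ : Type*} [PartialOrder Θ] {f f₁ f₂ : Θ → ℝ} {α₁ α₂ : ℝ}

theorem singleCrossing_iff :
    SingleCrossing f ↔
      Monotone (fun θ => SignType.sign (f θ)) ∨ Antitone (fun θ => SignType.sign (f θ)) := by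
  simp only [SingleCrossing, Monotone, Antitone, real_sign_le_sign_iff]

theorem strictRatioDominates_iff :
    StrictRatioDominates f₁ f₂ ↔ ∀ l h, l < h → 0 < ratioDet f₁ f₂ l h := by
  simp only [StrictRatioDominates, ratioDet, sub_pos]

theorem strictRatioDominates_swap_iff :
    StrictRatioDominates f₂ f₁ ↔ ∀ l h, l < h → ratioDet f₁ f₂ l h < 0 := by
  simp only [StrictRatioDominates, ratioDet, sub_neg, mul_comm]

namespace StrictRatioDominates

theorem sign_linComb_eq_of_lt (hD : StrictRatioDominates f₁ f₂) {x y q : Θ}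
    (hq : linComb α₁ α₂ f₁ f₂ q = 0) (hx : x < q) (hy : y < q) :
    SignType.sign (linComb α₁ α₂ f₁ f₂ x) = SignType.sign (linComb α₁ α₂ f₁ f₂ y) := by
  rw [strictRatioDominates_iff] at hD
  have hxy := ratioDet_mul_linComb α₁ α₂ f₁ f₂ x y q
  rw [hq, mul_zero, add_zero] at hxy
  simpa only [sign_mul, sign_pos (hD _ _ hx), sign_pos (hD _ _ hy), one_mul]
    using (congrArg SignType.sign hxy).symm

theorem monotoneOn_sign_linComb_Iic (hD : StrictRatioDominates f₁ f₂) {q : Θ}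
    (hq : 0 < linComb α₁ α₂ f₁ f₂ q) :
    MonotoneOn (fun θ => SignType.sign (linComb α₁ α₂ f₁ f₂ θ)) (Iic q) := by
  rw [strictRatioDominates_iff] at hD
  intro x _ y hyq hxy
  rcases hxy.eq_or_lt with rfl | hxy
  · rfl
  rcases (mem_Iic.1 hyq).eq_or_lt with rfl | hyq
  · simpa only [sign_pos hq] using SignType.le_one _
  set g := linComb α₁ α₂ f₁ f₂
  calc SignType.sign (g x)
      = SignType.sign (ratioDet f₁ f₂ y q * g x) := by rw [sign_mul, sign_pos (hD y q hyq), one_mul]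
    _ ≤ SignType.sign (ratioDet f₁ f₂ y q * g x + ratioDet f₁ f₂ x y * g q) :=
        SignType.sign.monotone (le_add_of_nonneg_right (mul_pos (hD x y hxy) hq).le)
    _ = SignType.sign (ratioDet f₁ f₂ x q * g y) := by
        rw [ratioDet_mul_linComb α₁ α₂ f₁ f₂ x y q]
    _ = SignType.sign (g y) := by rw [sign_mul, sign_pos (hD x q (hxy.trans hyq)), one_mul]

theorem antitoneOn_sign_linComb_Iic (hD : StrictRatioDominates f₁ f₂) {q : Θ}
    (hq : linComb α₁ α₂ f₁ f₂ q < 0) :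
    AntitoneOn (fun θ => SignType.sign (linComb α₁ α₂ f₁ f₂ θ)) (Iic q) := by
  have hneg := hD.monotoneOn_sign_linComb_Iic (α₁ := -α₁) (α₂ := -α₂) (q := q)
  simp only [linComb_neg_neg, Pi.neg_apply, Left.sign_neg, Left.neg_pos_iff] at hneg
  exact fun x hx y hy hxy => SignType.neg_le_neg_iff.1 (hneg hq hx hy hxy)

theorem monotoneOn_or_antitoneOn_sign_linComb_Iic (hD : StrictRatioDominates f₁ f₂)
    (α₁ α₂ : ℝ) (q : Θ) :
    MonotoneOn (fun θ => SignType.sign (linComb α₁ α₂ f₁ f₂ θ)) (Iic q) ∨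
      AntitoneOn (fun θ => SignType.sign (linComb α₁ α₂ f₁ f₂ θ)) (Iic q) := by
  rcases lt_trichotomy (linComb α₁ α₂ f₁ f₂ q) 0 with hq | hq | hq
  · exact Or.inr (hD.antitoneOn_sign_linComb_Iic hq)
  · exact monotoneOn_or_antitoneOn_Iic_of_const_Iio fun x hx y hy =>
      hD.sign_linComb_eq_of_lt hq hx hy
  · exact Or.inl (hD.monotoneOn_sign_linComb_Iic hq)

theorem singleCrossing_linComb [IsDirectedOrder Θ] (hD : StrictRatioDominates f₁ f₂)
    (α₁ α₂ : ℝ) : SingleCrossing (linComb α₁ α₂ f₁ f₂) :=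
  singleCrossing_iff.2 <|
    monotone_or_antitone_of_forall_Iic (hD.monotoneOn_or_antitoneOn_sign_linComb_Iic α₁ α₂)

theorem strictSingleCrossing_linComb [IsDirectedOrder Θ] (hD : StrictRatioDominates f₁ f₂)
    (hα : ¬(α₁ = 0 ∧ α₂ = 0)) : StrictSingleCrossing (linComb α₁ α₂ f₁ f₂) :=
  ⟨hD.singleCrossing_linComb α₁ α₂, fun l h hlh =>
    ratioDet_ne_zero_iff.1 (strictRatioDominates_iff.1 hD l h hlh).ne' α₁ α₂ hα⟩

end StrictRatioDominates

namespace StrictSingleCrossing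

theorem dual (hf : StrictSingleCrossing f) : StrictSingleCrossing (f ∘ OrderDual.ofDual) :=
  ⟨hf.1.symm.imp Antitone.dual_left Monotone.dual_left, fun l h hlh hzero =>
    hf.2 h l hlh hzero.symm⟩

theorem sign_eq_of_lt (hf : StrictSingleCrossing f) {x y z : Θ} (hz : f z = 0) (hx : x < z)
    (hy : y < z) : SignType.sign (f x) = SignType.sign (f y) := by
  have hx0 : f x ≠ 0 := fun h => hf.2 x z hx ⟨h, hz⟩
  have hy0 : f y ≠ 0 := fun h => hf.2 y z hy ⟨h, hz⟩
  rcases singleCrossing_iff.1 hf.1 with hmono | hanti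
  · have hneg {t : Θ} (ht : t < z) (ht0 : f t ≠ 0) : f t < 0 :=
      ht0.lt_of_le (by simpa only [hz, sign_zero, sign_nonpos_iff] using hmono ht.le)
    rw [sign_neg (hneg hx hx0), sign_neg (hneg hy hy0)]
  · have hpos {t : Θ} (ht : t < z) (ht0 : f t ≠ 0) : 0 < f t :=
      ht0.symm.lt_of_le (by simpa only [hz, sign_zero, sign_nonneg_iff] using hanti ht.le)
    rw [sign_pos (hpos hx hx0), sign_pos (hpos hy hy0)]

theorem sign_eq_of_gt (hf : StrictSingleCrossing f) {x y z : Θ} (hz : f z = 0) (hx : z < x)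
    (hy : z < y) : SignType.sign (f x) = SignType.sign (f y) :=
  hf.dual.sign_eq_of_lt (z := OrderDual.toDual z) hz (OrderDual.toDual_lt_toDual.2 hx)
    (OrderDual.toDual_lt_toDual.2 hy)

end StrictSingleCrossing

/-- Every nontrivial linear combination of `f₁` and `f₂` is strictly single crossing. -/
def LinCombStrictSingleCrossing (f₁ f₂ : Θ → ℝ) : Prop :=
  ∀ α₁ α₂ : ℝ, ¬(α₁ = 0 ∧ α₂ = 0) → StrictSingleCrossing (linComb α₁ α₂ f₁ f₂)

namespace LinCombStrictSingleCrossing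

theorem ratioDet_ne_zero (hf : LinCombStrictSingleCrossing f₁ f₂) {l h : Θ} (hlh : l < h) :
    ratioDet f₁ f₂ l h ≠ 0 :=
  ratioDet_ne_zero_iff.2 fun α₁ α₂ hα => (hf α₁ α₂ hα).2 l h hlh

theorem strictSingleCrossing_ratioDet_left (hf : LinCombStrictSingleCrossing f₁ f₂) {l h : Θ}
    (hlh : l < h) : StrictSingleCrossing (ratioDet f₁ f₂ l) := by
  have hl : ¬(f₂ l = 0 ∧ -f₁ l = 0) := fun hzero =>
    hf.ratioDet_ne_zero hlh (by simp [ratioDet, hzero.1, neg_eq_zero.1 hzero.2])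
  simpa only [ratioDet_left_eq_linComb] using hf _ _ hl

theorem strictSingleCrossing_ratioDet_right (hf : LinCombStrictSingleCrossing f₁ f₂) {l h : Θ}
    (hlh : l < h) : StrictSingleCrossing (ratioDet f₁ f₂ · h) := by
  have hh : ¬(-f₂ h = 0 ∧ f₁ h = 0) := fun hzero =>
    hf.ratioDet_ne_zero hlh (by simp [ratioDet, neg_eq_zero.1 hzero.1, hzero.2])
  simpa only [ratioDet_right_eq_linComb] using hf _ _ hh

theorem sign_ratioDet_eq [IsDirectedOrder Θ] (hf : LinCombStrictSingleCrossing f₁ f₂)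
    {a b c d : Θ} (hab : a < b) (hcd : c < d) :
    SignType.sign (ratioDet f₁ f₂ a b) = SignType.sign (ratioDet f₁ f₂ c d) := by
  obtain ⟨q, hbq, hdq⟩ := exists_ge_ge b d
  have haq := hab.trans_le hbq
  have hcq := hcd.trans_le hdq
  calc SignType.sign (ratioDet f₁ f₂ a b)
      = SignType.sign (ratioDet f₁ f₂ a q) :=
        (hf.strictSingleCrossing_ratioDet_left hab).sign_eq_of_gt (ratioDet_self f₁ f₂ a) hab haq
    _ = SignType.sign (ratioDet f₁ f₂ c q) :=
        (hf.strictSingleCrossing_ratioDet_right haq).sign_eq_of_lt (ratioDet_self f₁ f₂ q) haq hcq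
    _ = SignType.sign (ratioDet f₁ f₂ c d) :=
        (hf.strictSingleCrossing_ratioDet_left hcd).sign_eq_of_gt (ratioDet_self f₁ f₂ c) hcq hcd

theorem strictRatioOrdered [IsDirectedOrder Θ] (hf : LinCombStrictSingleCrossing f₁ f₂) :
    StrictRatioOrdered f₁ f₂ := by
  by_cases hneg : ∀ l h, l < h → ratioDet f₁ f₂ l h < 0
  · exact Or.inr (strictRatioDominates_swap_iff.2 hneg)
  · push Not at hneg
    obtain ⟨a, b, hab, hnonneg⟩ := hneg
    have hpos : 0 < ratioDet f₁ f₂ a b := hnonneg.lt_of_ne' (hf.ratioDet_ne_zero hab)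
    refine Or.inl (strictRatioDominates_iff.2 fun l h hlh => ?_)
    exact sign_eq_one_iff.1 ((hf.sign_ratioDet_eq hlh hab).trans (sign_pos hpos))

end LinCombStrictSingleCrossing

theorem linComb_strictSingleCrossing_iff_strictRatioOrdered_general [IsDirectedOrder Θ]
    (f₁ f₂ : Θ → ℝ) :
    (∀ α₁ α₂ : ℝ, ¬(α₁ = 0 ∧ α₂ = 0) →
      StrictSingleCrossing (fun θ => α₁ * f₁ θ + α₂ * f₂ θ)) ↔
      StrictRatioOrdered f₁ f₂ := by
  refine ⟨LinCombStrictSingleCrossing.strictRatioOrdered, ?_⟩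
  rintro (hD | hD) α₁ α₂ hα
  · exact hD.strictSingleCrossing_linComb hα
  · have hswap := hD.strictSingleCrossing_linComb (α₁ := α₂) (α₂ := α₁) (hα ·.symm)
    rwa [linComb_comm] at hswap

end Order

/-- All nonzero linear combinations of `f₁, f₂` are strictly
single crossing iff `f₁` and `f₂` are strictly ratio ordered. -/
theorem linComb_strictSingleCrossing_iff_strictRatioOrdered {Θ : Type*} [PartialOrder Θ]
    (hub : ∀ θ₁ θ₂ : Θ, ∃ θ : Θ, θ₁ ≤ θ ∧ θ₂ ≤ θ)
    (hlb : ∀ θ₁ θ₂ : Θ, ∃ θ : Θ, θ ≤ θ₁ ∧ θ ≤ θ₂)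
    (f₁ f₂ : Θ → ℝ) :
    (∀ α₁ α₂ : ℝ, ¬(α₁ = 0 ∧ α₂ = 0) →
      StrictSingleCrossing (fun θ => α₁ * f₁ θ + α₂ * f₂ θ)) ↔
      StrictRatioOrdered f₁ f₂ := by
  have : IsDirectedOrder Θ := ⟨hub⟩
  exact linComb_strictSingleCrossing_iff_strictRatioOrdered_general f₁ f₂
end
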